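/- Let T > 0 and let constants 0 < c₂ < c₃ (so that c₃⁻¹ < c₂⁻¹), C₁ > 0, C₀ ≥ 0, L > 0 be given. Let h̲ ≤ h̄ be real numbers with c₂⁻¹ ≤ h̲ and h̄ finite, and set C₂ := e^{C₁T}·h̄ + ((C₀+1)/C₁)(e^{C₁T} − 1). Let F̲, F̄ : [0,T] × ℝ → ℝ satisfy F̲ ≤ F̄ pointwise, with t ↦ F̄(t,y) and t ↦ F̲(t,y) Lebesgue measurable for each y, both F̄(t,·) and F̲(t,·) L-Lipschitz on [c₃⁻¹, C₂] for every t, and sup over t ∈ [0,T] and y ∈ [c₃⁻¹, C₂] of |F̄(t,y)| + |F̲(t,y)| finite. Suppose ε > 0 satisfies: F̄(t,y) ≤ C₀ + C₁y + εy² for all t and all y ∈ [c₃⁻¹, C₂]; F̲(t, c₃⁻¹) ≥ −ε for all t; εC₂² ≤ 1; and ε(e^{LT} − 1)/L ≤ c₂⁻¹ − c₃⁻¹. Then the two dominating backward ODEs ȳ(t) = h̄ + ∫_t^T F̄(s, ȳ(s)) ds and y̲(t) = h̲ + ∫_t^T F̲(s, y̲(s)) ds admit continuous solutions ȳ, y̲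 on [0,T] with c₃⁻¹ ≤ y̲(t) ≤ ȳ(t) ≤ C₂ for all t ∈ [0,T]. -/

import Mathlib

open MeasureTheory Set

theorem aux_compare (T L p q : ℝ) (hL : 0 < L) (hpq : p ≤ q)
    (y z f g : ℝ → ℝ) (hy : ContinuousOn y (Icc 0 T)) (hz : ContinuousOn z (Icc 0 T))
    (hf : ∀ a b, IntervalIntegrable f volume a b) (hg : ∀ a b, IntervalIntegrable g volume a b)
    (hye : ∀ t ∈ Icc (0:ℝ) T, y t = p + ∫ s in t..T, f s)
    (hze : ∀ t ∈ Icc (0:ℝ) T, z t = q + ∫ s in t..T, g s)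
    (hfg : ∀ s ∈ Icc (0:ℝ) T, z s < y s → f s - g s ≤ L * (y s - z s)) :
    ∀ t ∈ Icc (0:ℝ) T, y t ≤ z t := by
  by_contra! hcon
  obtain ⟨t', ht', hlt⟩ := hcon
  have hwc : ContinuousOn (fun t => y t - z t) (Icc 0 T) := hy.sub hz
  have hmc : ContinuousOn (fun t => Real.exp (-(2*L*(T-t))) * (y t - z t)) (Icc 0 T) :=
    ContinuousOn.mul (by fun_prop) hwc
  obtain ⟨t0, ht0, hmax⟩ := isCompact_Icc.exists_isMaxOn ⟨t', ht'⟩ hmc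
  have hmax' : ∀ s ∈ Icc (0:ℝ) T, Real.exp (-(2*L*(T-s))) * (y s - z s)
      ≤ Real.exp (-(2*L*(T-t0))) * (y t0 - z t0) := fun s hs => hmax hs
  set M := Real.exp (-(2*L*(T-t0))) * (y t0 - z t0) with hM
  have hMpos : 0 < M := lt_of_lt_of_le (mul_pos (Real.exp_pos _) (sub_pos.2 hlt)) (hmax' t' ht')
  have hw0 : 0 < y t0 - z t0 := by
    rcases mul_pos_iff.1 hMpos with h | h
    · exact h.2
    · exact absurd h.1 (not_lt.2 (Real.exp_pos _).le)
  have hbound : ∀ s ∈ Icc (0:ℝ) T, y s - z s ≤ M * Real.exp (2*L*(T-s)) := by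
    intro s hs
    have h1 := mul_le_mul_of_nonneg_right (hmax' s hs) (Real.exp_pos (2*L*(T-s))).le
    have h2 : Real.exp (-(2*L*(T-s))) * Real.exp (2*L*(T-s)) = 1 := by
      rw [← Real.exp_add]; simp
    rw [mul_right_comm, h2, one_mul] at h1
    exact h1
  have hw0' : y t0 - z t0 = M * Real.exp (2*L*(T-t0)) := by
    have h2 : Real.exp (-(2*L*(T-t0))) * Real.exp (2*L*(T-t0)) = 1 := by
      rw [← Real.exp_add]; simp
    rw [hM, mul_right_comm, h2, one_mul]
  -- first zero
  have hT0 : T ∈ Icc (0:ℝ) T := ⟨ht0.1.trans ht0.2, le_rfl⟩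
  have hwT : y T - z T ≤ 0 := by
    rw [hye T hT0, hze T hT0]; simp; linarith
  have hsub : Icc t0 T ⊆ Icc (0:ℝ) T := Icc_subset_Icc ht0.1 le_rfl
  set S : Set ℝ := Icc t0 T ∩ (fun t => y t - z t) ⁻¹' Iic 0 with hS
  have hSc : IsClosed S := (hwc.mono hsub).preimage_isClosed_of_isClosed isClosed_Icc isClosed_Iic
  have hSne : S.Nonempty := ⟨T, ⟨ht0.2, le_rfl⟩, hwT⟩
  have hSb : BddBelow S := ⟨t0, fun s hs => hs.1.1⟩
  have ht2 : sInf S ∈ S := hSc.csInf_mem hSne hSb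
  set t2 := sInf S with ht2d
  have hpos : ∀ s ∈ Ico t0 t2, 0 < y s - z s := by
    intro s hs
    by_contra! h
    exact absurd (csInf_le hSb (show s ∈ S from ⟨⟨hs.1, hs.2.le.trans ht2.1.2⟩, h⟩)) (not_le.2 hs.2)
  have e0 : y t0 - z t0 = (y t2 - z t2) + ∫ s in t0..t2, (f s - g s) := by
    rw [hye t0 ht0, hze t0 ht0, hye t2 (hsub ht2.1), hze t2 (hsub ht2.1),
      intervalIntegral.integral_sub (hf _ _) (hg _ _),
      ← intervalIntegral.integral_add_adjacent_intervals (hf t0 t2) (hf t2 T),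
      ← intervalIntegral.integral_add_adjacent_intervals (hg t0 t2) (hg t2 T)]
    ring
  have e1 : ∫ s in t0..t2, (f s - g s) ≤ ∫ s in t0..t2, L * (M * Real.exp (2*L*(T-s))) := by
    apply intervalIntegral.integral_mono_on_of_le_Ioo ht2.1.1 ((hf _ _).sub (hg _ _))
    · apply Continuous.intervalIntegrable; fun_prop
    · intro s hs
      have hs' : s ∈ Icc (0:ℝ) T := hsub ⟨hs.1.le, hs.2.le.trans ht2.1.2⟩
      have := hpos s ⟨hs.1.le, hs.2⟩
      exact (hfg s hs' (by linarith)).trans (mul_le_mul_of_nonneg_left (hbound s hs') hL.le)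
  have e2 : ∫ s in t0..t2, L * (M * Real.exp (2*L*(T-s)))
      = -(M/2) * Real.exp (2*L*(T-t2)) - -(M/2) * Real.exp (2*L*(T-t0)) := by
    apply intervalIntegral.integral_eq_sub_of_hasDerivAt (f := fun s => -(M/2) * Real.exp (2*L*(T-s)))
    · intro s _
      have := ((((hasDerivAt_id s).const_sub T).const_mul (2*L)).exp).const_mul (-(M/2))
      refine this.congr_deriv ?_
      simp only [id]; ring
    · apply Continuous.intervalIntegrable; fun_prop
  have h3 : y t2 - z t2 ≤ 0 := ht2.2
  have h4 := mul_pos hMpos (Real.exp_pos (2*L*(T-t2)))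
  linarith

theorem aux_meas (G : ℝ → ℝ → ℝ) (L : ℝ) (hm : ∀ y, Measurable fun t => G t y)
    (hlip : ∀ t x y, |G t x - G t y| ≤ L * |x - y|) (v : ℝ → ℝ) (hv : Continuous v) :
    Measurable fun s => G s (v s) := by
  have hc : ∀ t, Continuous (G t) := fun t =>
    (LipschitzWith.of_dist_le' (f := G t) (K := L) (fun x y => by
      simpa [Real.dist_eq] using hlip t x y)).continuous
  have h := measurable_uncurry_of_continuous_of_measurable (u := fun y t => G t y) hc hm
  exact h.comp (hv.measurable.prodMk measurable_id)

theorem aux_int (G : ℝ → ℝ → ℝ) (L K : ℝ) (hm : ∀ y, Measurable fun t => G t y)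
    (hlip : ∀ t x y, |G t x - G t y| ≤ L * |x - y|) (hb : ∀ t y, |G t y| ≤ K)
    (v : ℝ → ℝ) (hv : Continuous v) (a b : ℝ) :
    IntervalIntegrable (fun s => G s (v s)) volume a b := by
  have h1 : IntervalIntegrable (fun _ : ℝ => K) volume a b := intervalIntegrable_const
  exact h1.mono_fun (aux_meas G L hm hlip v hv).aestronglyMeasurable
    (Filter.Eventually.of_forall fun s => by
      simpa using (hb s (v s)).trans (le_abs_self K))

theorem aux_exists (T h L K : ℝ) (hT : 0 < T) (hL : 0 < L) (G : ℝ → ℝ → ℝ)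
    (hm : ∀ y, Measurable fun t => G t y)
    (hlip : ∀ t x y, |G t x - G t y| ≤ L * |x - y|) (hb : ∀ t y, |G t y| ≤ K) :
    ∃ y : ℝ → ℝ, Continuous y ∧ ∀ t ∈ Icc (0:ℝ) T, y t = h + ∫ s in t..T, G s (y s) := by
  let V : C(Icc (0:ℝ) T, ℝ) → ℝ → ℝ := fun u s => Real.exp (2*L*(T-s)) * IccExtend hT.le u s
  have hV : ∀ u, Continuous (V u) := fun u =>
    Continuous.mul (by fun_prop) (u.continuous.Icc_extend')
  have hI : ∀ u a b, IntervalIntegrable (fun s => G s (V u s)) volume a b := fun u a b =>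
    aux_int G L K hm hlip hb _ (hV u) a b
  have hIc : ∀ u, Continuous fun t => ∫ s in t..T, G s (V u s) := by
    intro u
    have := (intervalIntegral.continuous_primitive (hI u) T).neg
    refine this.congr fun t => ?_
    exact (intervalIntegral.integral_symm T t).symm
  let Ψ : C(Icc (0:ℝ) T, ℝ) → C(Icc (0:ℝ) T, ℝ) := fun u =>
    ⟨fun t => Real.exp (-(2*L*(T-t))) * (h + ∫ s in (t:ℝ)..T, G s (V u s)), by
      have := (hIc u).comp (continuous_subtype_val (p := fun t => t ∈ Icc (0:ℝ) T))
      exact Continuous.mul (by fun_prop) (continuous_const.add this)⟩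
  have hΨ : ContractingWith (1/2 : NNReal) Ψ := by
    refine ⟨by rw [← NNReal.coe_lt_coe]; norm_num, LipschitzWith.of_dist_le_mul fun u v => ?_⟩
    rw [ContinuousMap.dist_le (by positivity)]
    intro t
    have ht := t.2
    set D := dist u v with hD
    have hD0 : 0 ≤ D := dist_nonneg
    have h1 : ‖∫ s in (t:ℝ)..T, (G s (V u s) - G s (V v s))‖
        ≤ ∫ s in (t:ℝ)..T, L * (Real.exp (2*L*(T-s)) * D) := by
      apply intervalIntegral.norm_integral_le_of_norm_le ht.2
      · refine Filter.Eventually.of_forall fun s _ => ?_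
        rw [Real.norm_eq_abs]
        refine (hlip _ _ _).trans (mul_le_mul_of_nonneg_left ?_ hL.le)
        simp only [V]
        rw [← mul_sub, abs_mul, abs_of_pos (Real.exp_pos _)]
        refine mul_le_mul_of_nonneg_left ?_ (Real.exp_pos _).le
        exact ContinuousMap.dist_apply_le_dist (f := u) (g := v) _
      · apply Continuous.intervalIntegrable; fun_prop
    have h2 : ∫ s in (t:ℝ)..T, L * (Real.exp (2*L*(T-s)) * D)
      = -(D/2) * Real.exp (2*L*(T-T)) - -(D/2) * Real.exp (2*L*(T-t)) := by
      apply intervalIntegral.integral_eq_sub_of_hasDerivAt (f := fun s => -(D/2) * Real.exp (2*L*(T-s)))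
      · intro s _
        have := ((((hasDerivAt_id s).const_sub T).const_mul (2*L)).exp).const_mul (-(D/2))
        refine this.congr_deriv ?_
        simp only [id]; ring
      · apply Continuous.intervalIntegrable; fun_prop
    have h3 : Real.exp (-(2*L*(T-t))) * Real.exp (2*L*(T-t)) = 1 := by
      rw [← Real.exp_add]; simp
    have h4 : dist (Ψ u t) (Ψ v t) = Real.exp (-(2*L*(T-t))) *
        ‖∫ s in (t:ℝ)..T, (G s (V u s) - G s (V v s))‖ := by
      rw [intervalIntegral.integral_sub (hI _ _ _) (hI _ _ _), Real.dist_eq]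
      simp only [Ψ, ContinuousMap.coe_mk]
      rw [← mul_sub, abs_mul, abs_of_pos (Real.exp_pos _), Real.norm_eq_abs]
      congr 2; ring
    rw [h4]
    have h5 : ‖∫ s in (t:ℝ)..T, (G s (V u s) - G s (V v s))‖ ≤ (D/2) * Real.exp (2*L*(T-t)) := by
      rw [h2] at h1
      refine h1.trans ?_
      simp; linarith
    calc _ ≤ Real.exp (-(2*L*(T-t))) * ((D/2) * Real.exp (2*L*(T-t))) :=
          mul_le_mul_of_nonneg_left h5 (Real.exp_pos _).le
      _ = D/2 * (Real.exp (-(2*L*(T-t))) * Real.exp (2*L*(T-t))) := by ring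
      _ = D / 2 := by rw [h3, mul_one]
      _ ≤ _ := by push_cast; linarith
  have : Nonempty C(Icc (0:ℝ) T, ℝ) := ⟨0⟩
  let u := ContractingWith.fixedPoint Ψ hΨ
  have hu : Ψ u = u := hΨ.fixedPoint_isFixedPt
  refine ⟨V u, hV u, fun t ht => ?_⟩
  have h1 : u ⟨t, ht⟩ = Real.exp (-(2*L*(T-t))) * (h + ∫ s in t..T, G s (V u s)) := by
    conv_lhs => rw [← hu]
    rfl
  have h3 : Real.exp (2*L*(T-t)) * Real.exp (-(2*L*(T-t))) = 1 := by
    rw [← Real.exp_add]; simp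
  have h2 : V u t = Real.exp (2*L*(T-t)) * u ⟨t, ht⟩ := by
    simp only [V]; rw [IccExtend_of_mem hT.le u ht]
  rw [h2, h1, ← mul_assoc, h3, one_mul]

/-- Truncated generator. -/
def auxG (T a b : ℝ) (F : ℝ → ℝ → ℝ) : ℝ → ℝ → ℝ :=
  fun t y => F (max 0 (min t T)) (max a (min b y))

theorem auxG_eq (T a b : ℝ) (F : ℝ → ℝ → ℝ) {t : ℝ} (ht : t ∈ Icc (0:ℝ) T) (y : ℝ) :
    auxG T a b F t y = F t (max a (min b y)) := by
  simp [auxG, ht.1, ht.2]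

theorem auxG_eq' (T a b : ℝ) (F : ℝ → ℝ → ℝ) {t : ℝ} (ht : t ∈ Icc (0:ℝ) T) {y : ℝ}
    (hy : y ∈ Icc a b) : auxG T a b F t y = F t y := by
  simp [auxG, ht.1, ht.2, hy.1, hy.2]

theorem aux_tmem {T : ℝ} (hT : 0 < T) (t : ℝ) : max 0 (min t T) ∈ Icc (0:ℝ) T :=
  ⟨le_max_left _ _, max_le hT.le (min_le_right _ _)⟩

theorem aux_ymem {a b : ℝ} (hab : a ≤ b) (y : ℝ) : max a (min b y) ∈ Icc a b :=
  ⟨le_max_left _ _, max_le hab (min_le_left _ _)⟩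

theorem auxG_meas (T a b : ℝ) (F : ℝ → ℝ → ℝ) (hm : ∀ y, Measurable fun t => F t y) (y : ℝ) :
    Measurable fun t => auxG T a b F t y :=
  (hm (max a (min b y))).comp (measurable_const.max (measurable_id.min measurable_const))

theorem auxG_lip (T a b L : ℝ) (hT : 0 < T) (hab : a ≤ b) (hL : 0 < L) (F : ℝ → ℝ → ℝ)
    (hF : ∀ t ∈ Icc (0:ℝ) T, LipschitzOnWith (Real.toNNReal L) (fun y => F t y) (Icc a b))
    (t x y : ℝ) : |auxG T a b F t x - auxG T a b F t y| ≤ L * |x - y| := by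
  have h := (hF _ (aux_tmem hT t)).dist_le_mul _ (aux_ymem hab x) _ (aux_ymem hab y)
  rw [Real.coe_toNNReal _ hL.le, Real.dist_eq, Real.dist_eq] at h
  refine h.trans (mul_le_mul_of_nonneg_left ?_ hL.le)
  refine (abs_max_sub_max_le_max _ _ _ _).trans ?_
  refine max_le (by simp) ((abs_min_sub_min_le_max _ _ _ _).trans (max_le (by simp) le_rfl))


/-- Bounded solutions of the dominating ODEs in the case `σ₃ ≥ c₁⁻¹`,
`h ≥ c₂⁻¹` (Theorem 5.8, case (5.21)); solutions stay in `[c₃⁻¹, C₂]`. -/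
theorem stmt10
    (T c2 c3 C1 C0 L : ℝ) (hT : 0 < T) (hc2 : 0 < c2) (hc23 : c2 < c3)
    (hC1 : 0 < C1) (hC0 : 0 ≤ C0) (hL : 0 < L)
    (hl hu : ℝ) (hlu : hl ≤ hu) (hhl : c2⁻¹ ≤ hl)
    (Fl Fu : ℝ → ℝ → ℝ)
    (hle : ∀ t ∈ Icc (0:ℝ) T, ∀ y : ℝ, Fl t y ≤ Fu t y)
    (hmeasu : ∀ y : ℝ, Measurable fun t => Fu t y)
    (hmeasl : ∀ y : ℝ, Measurable fun t => Fl t y)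
    (hLipu : ∀ t ∈ Icc (0:ℝ) T,
      LipschitzOnWith (Real.toNNReal L) (fun y => Fu t y)
        (Icc c3⁻¹ (Real.exp (C1 * T) * hu + ((C0 + 1) / C1) * (Real.exp (C1 * T) - 1))))
    (hLipl : ∀ t ∈ Icc (0:ℝ) T,
      LipschitzOnWith (Real.toNNReal L) (fun y => Fl t y)
        (Icc c3⁻¹ (Real.exp (C1 * T) * hu + ((C0 + 1) / C1) * (Real.exp (C1 * T) - 1))))
    (hbdd : ∃ K : ℝ, ∀ t ∈ Icc (0:ℝ) T,
      ∀ y ∈ Icc c3⁻¹ (Real.exp (C1 * T) * hu + ((C0 + 1) / C1) * (Real.exp (C1 * T) - 1)),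
      |Fu t y| + |Fl t y| ≤ K)
    (ε : ℝ) (hε : 0 < ε)
    (hgrowu : ∀ t ∈ Icc (0:ℝ) T,
      ∀ y ∈ Icc c3⁻¹ (Real.exp (C1 * T) * hu + ((C0 + 1) / C1) * (Real.exp (C1 * T) - 1)),
      Fu t y ≤ C0 + C1 * y + ε * y ^ 2)
    (hFl : ∀ t ∈ Icc (0:ℝ) T, -ε ≤ Fl t c3⁻¹)
    (hεC2 : ε * (Real.exp (C1 * T) * hu + ((C0 + 1) / C1) * (Real.exp (C1 * T) - 1)) ^ 2 ≤ 1)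
    (hεsmall : ε * (Real.exp (L * T) - 1) / L ≤ c2⁻¹ - c3⁻¹) :
    ∃ yu yl : ℝ → ℝ,
      ContinuousOn yu (Icc 0 T) ∧ ContinuousOn yl (Icc 0 T) ∧
      (∀ t ∈ Icc (0:ℝ) T, yu t = hu + ∫ s in t..T, Fu s (yu s)) ∧
      (∀ t ∈ Icc (0:ℝ) T, yl t = hl + ∫ s in t..T, Fl s (yl s)) ∧
      (∀ t ∈ Icc (0:ℝ) T, c3⁻¹ ≤ yl t ∧ yl t ≤ yu t ∧
        yu t ≤ Real.exp (C1 * T) * hu + ((C0 + 1) / C1) * (Real.exp (C1 * T) - 1)) := by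
  obtain ⟨K, hK⟩ := hbdd
  set b := Real.exp (C1 * T) * hu + ((C0 + 1) / C1) * (Real.exp (C1 * T) - 1) with hb
  set a := c3⁻¹ with ha
  have hc3 : 0 < c3 := hc2.trans hc23
  have ha0 : 0 < a := inv_pos.2 hc3
  have hac : a < c2⁻¹ := inv_strictAnti₀ hc2 hc23
  have hu0 : a < hu := by linarith
  have hmono : ∀ τ, 0 ≤ τ → τ ≤ T → hu ≤ Real.exp (C1 * τ) * hu + ((C0 + 1) / C1) * (Real.exp (C1 * τ) - 1) ∧
      Real.exp (C1 * τ) * hu + ((C0 + 1) / C1) * (Real.exp (C1 * τ) - 1) ≤ b := by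
    intro τ h0 h1
    have e1 : 1 ≤ Real.exp (C1 * τ) := Real.one_le_exp (by positivity)
    have e2 : Real.exp (C1 * τ) ≤ Real.exp (C1 * T) :=
      Real.exp_le_exp.2 (mul_le_mul_of_nonneg_left h1 hC1.le)
    have e3 : 0 ≤ (C0 + 1) / C1 := by positivity
    have e4 : 0 ≤ hu := by linarith
    constructor
    · nlinarith [mul_nonneg e3 (sub_nonneg.2 e1), mul_nonneg e4 (sub_nonneg.2 e1)]
    · rw [hb]
      nlinarith [mul_nonneg e3 (sub_nonneg.2 e2), mul_nonneg e4 (sub_nonneg.2 e2)]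
  have hab : a ≤ b := by
    have := hmono T hT.le le_rfl
    linarith [this.1, this.2]
  have mu := auxG_meas T a b Fu hmeasu
  have ml := auxG_meas T a b Fl hmeasl
  have lu := auxG_lip T a b L hT hab hL Fu hLipu
  have ll := auxG_lip T a b L hT hab hL Fl hLipl
  have bu : ∀ t y, |auxG T a b Fu t y| ≤ K := fun t y =>
    le_trans (le_add_of_nonneg_right (abs_nonneg _)) (hK _ (aux_tmem hT t) _ (aux_ymem hab y))
  have bl : ∀ t y, |auxG T a b Fl t y| ≤ K := fun t y =>
    le_trans (le_add_of_nonneg_left (abs_nonneg _)) (hK _ (aux_tmem hT t) _ (aux_ymem hab y))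
  obtain ⟨yu, cu, eu⟩ := aux_exists T hu L K hT hL _ mu lu bu
  obtain ⟨yl, cl, el⟩ := aux_exists T hl L K hT hL _ ml ll bl
  have iu := aux_int _ L K mu lu bu yu cu
  have il := aux_int _ L K ml ll bl yl cl
  -- order
  have H1 : ∀ t ∈ Icc (0:ℝ) T, yl t ≤ yu t := by
    refine aux_compare T L hl hu hL hlu yl yu _ _ cl.continuousOn cu.continuousOn il iu el eu ?_
    intro s hs hlt
    have h1 := (abs_le.1 (ll s (yl s) (yu s))).2
    rw [abs_of_pos (sub_pos.2 hlt)] at h1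
    have h2 : auxG T a b Fl s (yu s) ≤ auxG T a b Fu s (yu s) := hle _ (aux_tmem hT s) _
    linarith
  -- upper bound
  have H2 : ∀ t ∈ Icc (0:ℝ) T, yu t ≤ b := by
    let Y : ℝ → ℝ := fun t => Real.exp (C1 * (T-t)) * hu + ((C0 + 1) / C1) * (Real.exp (C1 * (T-t)) - 1)
    have cY : Continuous Y := by fun_prop
    have cg : Continuous fun s => C0 + 1 + C1 * Y s := by fun_prop
    have eY : ∀ t ∈ Icc (0:ℝ) T, Y t = hu + ∫ s in t..T, (C0 + 1 + C1 * Y s) := by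
      intro t _
      have : ∫ s in t..T, (C0 + 1 + C1 * Y s) = -Y T - -Y t := by
        apply intervalIntegral.integral_eq_sub_of_hasDerivAt (f := fun s => -Y s)
        · intro s _
          have h0 := (((hasDerivAt_id s).const_sub T).const_mul C1).exp
          have := ((h0.mul_const hu).add ((h0.sub_const 1).const_mul ((C0+1)/C1))).neg
          refine this.congr_deriv ?_
          simp only [Y, id]; field_simp; ring
        · exact cg.intervalIntegrable _ _
      rw [this]; simp [Y]; ring
    intro t ht
    refine le_trans ?_ (hmono (T-t) (by linarith [ht.2]) (by linarith [ht.1])).2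
    revert t
    refine aux_compare T C1 hu hu hC1 le_rfl yu Y _ _ cu.continuousOn cY.continuousOn iu
      (fun _ _ => cg.intervalIntegrable _ _) eu eY ?_
    intro s hs hlt
    have hYs : hu ≤ Y s := (hmono (T-s) (by linarith [hs.2]) (by linarith [hs.1])).1
    rw [auxG_eq T a b Fu hs]
    have hm := aux_ymem hab (yu s)
    have h1 := hgrowu s hs _ hm
    have h2 : max a (min b (yu s)) ≤ yu s := max_le (by linarith) (min_le_right _ _)
    set m := max a (min b (yu s))
    have h3 : ε * m ^ 2 ≤ 1 := by
      refine le_trans (mul_le_mul_of_nonneg_left ?_ hε.le) hεC2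
      exact pow_le_pow_left₀ (ha0.le.trans hm.1) hm.2 2
    nlinarith
  -- lower bound
  have H3 : ∀ t ∈ Icc (0:ℝ) T, a ≤ yl t := by
    let X : ℝ → ℝ := fun t => Real.exp (-(L * (T-t))) * (c2⁻¹ - a + ε / L) - ε / L
    have cX : Continuous X := by fun_prop
    have cg : Continuous fun s => -ε - L * X s := by fun_prop
    have X0 : ∀ t ∈ Icc (0:ℝ) T, 0 ≤ X t := by
      intro t ht
      have h3 : Real.exp (-(L*(T-t))) * Real.exp (L*(T-t)) = 1 := by
        rw [← Real.exp_add]; simp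
      have h4 : Real.exp (L*(T-t)) ≤ Real.exp (L*T) :=
        Real.exp_le_exp.2 (mul_le_mul_of_nonneg_left (by linarith [ht.1]) hL.le)
      have h5 : ε / L * Real.exp (L*(T-t)) ≤ c2⁻¹ - a + ε / L := by
        have : ε / L * Real.exp (L*(T-t)) ≤ ε / L * Real.exp (L*T) :=
          mul_le_mul_of_nonneg_left h4 (by positivity)
        have e : ε * (Real.exp (L * T) - 1) / L = ε / L * Real.exp (L*T) - ε / L := by ring
        linarith
      have h6 := mul_le_mul_of_nonneg_left h5 (Real.exp_pos (-(L*(T-t)))).le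
      have h7 : Real.exp (-(L*(T-t))) * (ε / L * Real.exp (L*(T-t))) = ε / L := by
        rw [mul_left_comm, h3, mul_one]
      simp only [X]; linarith
    have eX : ∀ t ∈ Icc (0:ℝ) T, a + X t = c2⁻¹ + ∫ s in t..T, (-ε - L * X s) := by
      intro t _
      have : ∫ s in t..T, (-ε - L * X s) = -X T - -X t := by
        apply intervalIntegral.integral_eq_sub_of_hasDerivAt (f := fun s => -X s)
        · intro s _
          have h0 := (((hasDerivAt_id s).const_sub T).const_mul L).neg.exp
          have := ((h0.mul_const (c2⁻¹ - a + ε / L)).sub_const (ε / L)).neg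
          refine this.congr_deriv ?_
          simp only [X, id, Pi.neg_apply]; field_simp; ring
        · exact cg.intervalIntegrable _ _
      rw [this]; simp [X]; ring
    intro t ht
    refine le_trans (le_add_of_nonneg_right (X0 t ht)) ?_
    revert t
    refine aux_compare T L c2⁻¹ hl hL hhl (fun t => a + X t) yl _ _ (by fun_prop) cl.continuousOn
      (fun _ _ => cg.intervalIntegrable _ _) il eX el ?_
    intro s hs hlt
    have h0 := X0 s hs
    rw [auxG_eq T a b Fl hs]
    have hm := aux_ymem hab (yl s)
    have h2 : max a (min b (yl s)) ≤ a + X s :=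
      max_le (by linarith) ((min_le_right _ _).trans hlt.le)
    set m := max a (min b (yl s))
    have h := (hLipl s hs).dist_le_mul m hm a ⟨le_rfl, hab⟩
    rw [Real.coe_toNNReal _ hL.le, Real.dist_eq, Real.dist_eq, abs_of_nonneg (sub_nonneg.2 hm.1)] at h
    have h3 := (abs_le.1 h).1
    have h4 := hFl s hs
    nlinarith
  refine ⟨yu, yl, cu.continuousOn, cl.continuousOn, ?_, ?_, fun t ht => ⟨H3 t ht, H1 t ht, H2 t ht⟩⟩
  · intro t ht
    rw [eu t ht]
    congr 1
    apply intervalIntegral.integral_congr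
    intro s hs
    rw [uIcc_of_le ht.2] at hs
    have hs' : s ∈ Icc (0:ℝ) T := ⟨ht.1.trans hs.1, hs.2⟩
    exact auxG_eq' T a b Fu hs' ⟨(H3 s hs').trans (H1 s hs'), H2 s hs'⟩
  · intro t ht
    rw [el t ht]
    congr 1
    apply intervalIntegral.integral_congr
    intro s hs
    rw [uIcc_of_le ht.2] at hs
    have hs' : s ∈ Icc (0:ℝ) T := ⟨ht.1.trans hs.1, hs.2⟩
    exact auxG_eq' T a b Fl hs' ⟨H3 s hs', (H1 s hs').trans (H2 s hs')⟩
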